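/- arXiv:2405.11602 — 3 statements merged into one kernel-verified Lean document; each statement's English description precedes it below -/
import Mathlib

section
/- Let R be a commutative ring in which 2 = 0. For a ∈ R write M(a) for the 2×2 matrix over R with rows (1, a²) and (a, 1 + a³). Then for all t, s ∈ R with t⁴ = 0 and s⁴ = 0 one has: (i) det M(a) = 1 for every a ∈ R; (ii) (1 + t²s)² = 1, so 1 + t²s is a unit of R; (iii) (1 + t²s) · (M(t) · M(s)) = M(t + s + t²s²). In particular, the classes of M(t) and M(s) in PGL₂(R) multiply according to the law t ⊞ s = t + s + t²s². -/
/-!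
After multiplying out, each claim is a polynomial identity in `t` and `s` modulo `2` and
`t ^ 4`. The scalar `1 + t ^ 2 * s` is forced: it is the upper left entry of `M(t) * M(s)`,
whereas that of `M(t + s + t ^ 2 * s ^ 2)` is `1`; being its own inverse, it normalises the product.
-/

/-- The matrix `M(a)` with rows `(1, a²)` and `(a, 1 + a³)`. -/
def atiyahMatrix {R : Type*} [CommRing R] (a : R) : Matrix (Fin 2) (Fin 2) R :=
  !![1, a ^ 2; a, 1 + a ^ 3]

/-- Over a commutative ring in which `2 = 0`, for `t, s` with `t⁴ = s⁴ = 0`: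
(i) every `M(a)` has determinant `1`; (ii) `(1 + t²s)² = 1`, so `1 + t²s` is a unit;
(iii) `(1 + t²s) • (M(t) * M(s)) = M(t + s + t²s²)`, so the classes of `M(t)` and `M(s)`
in `PGL₂(R)` multiply according to `t ⊞ s = t + s + t²s²`. -/
theorem atiyahMatrix_mul (R : Type*) [CommRing R] (h2 : (2 : R) = 0)
    (t s : R) (ht : t ^ 4 = 0) (hs : s ^ 4 = 0) :
    (∀ a : R, (atiyahMatrix a).det = 1) ∧
    (1 + t ^ 2 * s) ^ 2 = 1 ∧ IsUnit (1 + t ^ 2 * s) ∧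
    (1 + t ^ 2 * s) • (atiyahMatrix t * atiyahMatrix s) =
      atiyahMatrix (t + s + t ^ 2 * s ^ 2) := by
  have hsq : (1 + t ^ 2 * s) ^ 2 = 1 := by
    linear_combination t ^ 2 * s * h2 + s ^ 2 * ht
  refine ⟨fun a => ?_, hsq, IsUnit.of_pow_eq_one hsq two_ne_zero, ?_⟩
  · simp only [atiyahMatrix, Matrix.det_fin_two_of]
    ring
  · ext i j
    fin_cases i <;> fin_cases j <;>
      simp [atiyahMatrix] <;> grind
end

section
/- Let R be a commutative ring in which 2 = 0. For t, s ∈ R with t⁴ = 0 and s⁴ = 0 define t ⊞ s = t + s + t²s². Then: (i) (t ⊞ s)⁴ = 0; (ii) t ⊞ s = s ⊞ t; (iii) t ⊞ 0 = t; (iv) t ⊞ t = 0; (v) for every u ∈ R with u⁴ = 0, (t ⊞ s) ⊞ u = t ⊞ (s ⊞ u). Hence ⊞ makes the set {t ∈ R : t⁴ = 0} an abelian group with identity 0 in which every element is its own inverse. -/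
/-! The law is `t + s` corrected by `t²s²`, a term depending only on the squares of the
arguments. In characteristic 2 squaring is additive and kills the correction, since
`(t²s²)² = t⁴s⁴ = 0`; so squaring turns `⊞` into `+` (`boxAdd_sq`). Associativity then says that
`(t, s) ↦ t²s²` is a 2-cocycle, which holds because it is biadditive for `⊞`. -/

/-- The composition law `t ⊞ s = t + s + t²s²` of the 2-torsion of a supersingular
elliptic curve in characteristic 2. -/
def boxAdd {R : Type*} [CommRing R] (t s : R) : R := t + s + t ^ 2 * s ^ 2

theorem boxAdd_sq {R : Type*} [CommRing R] (h2 : (2 : R) = 0) (t s : R) (ht : t ^ 4 = 0) :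
    (boxAdd t s) ^ 2 = t ^ 2 + s ^ 2 := by
  unfold boxAdd
  linear_combination (t * s + t ^ 3 * s ^ 2 + t ^ 2 * s ^ 3) * h2 + s ^ 4 * ht

/-- Over a commutative ring in which `2 = 0`, the law `t ⊞ s = t + s + t²s²` on
`{t : R | t⁴ = 0}` satisfies: (i) `(t ⊞ s)⁴ = 0`; (ii) commutativity; (iii) `0` is a
right identity; (iv) every element is its own inverse; (v) associativity.  Hence it
makes `{t : R | t⁴ = 0}` an abelian group with identity `0` in which every element is
its own inverse. -/
theorem boxAdd_group_law (R : Type*) [CommRing R] (h2 : (2 : R) = 0)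
    (t s : R) (ht : t ^ 4 = 0) (hs : s ^ 4 = 0) :
    (boxAdd t s) ^ 4 = 0 ∧
    boxAdd t s = boxAdd s t ∧
    boxAdd t 0 = t ∧
    boxAdd t t = 0 ∧
    (∀ u : R, u ^ 4 = 0 → boxAdd (boxAdd t s) u = boxAdd t (boxAdd s u)) := by
  refine ⟨?_, ?_, ?_, ?_, fun u _ => ?_⟩
  · have h := boxAdd_sq h2 t s ht
    linear_combination (boxAdd t s ^ 2 + t ^ 2 + s ^ 2) * h + ht + hs + t ^ 2 * s ^ 2 * h2
  · unfold boxAdd; ring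
  · simp [boxAdd]
  · unfold boxAdd
    linear_combination t * h2 + ht
  · have h1 := boxAdd_sq h2 t s ht
    have h3 := boxAdd_sq h2 s u hs
    unfold boxAdd at h1 h3 ⊢
    rw [h1, h3]
    ring
end

section
/- Let R be a commutative ring of characteristic 2 and let t, s ∈ R satisfy t⁴ = 0 and s⁴ = 0. Let x and y be the 2-typical Witt vectors over R whose coefficient sequences are (t², t, 0, 0, …) and (s², s, 0, 0, …) respectively. Then, setting u = t + s + t²s², one has (x + y).coeff 0 = u² and (x + y).coeff 1 = u. -/
/-!
The first coordinate of a sum of Witt vectors is `x₀ + y₀`. For `p = 2`, the second ghost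
component `X₀² + 2 X₁` is additive, which forces the second coordinate of the sum to be
`x₁ + y₁ + (x₀² + y₀² - (x₀ + y₀)²) / 2 = x₁ + y₁ - x₀ y₀`. Substituting `x = (t², t)`,
`y = (s², s)` and using that signs are irrelevant in characteristic 2 gives `u`; and
`u² = t² + s² + t⁴ s⁴ = t² + s²` is the first coordinate.
-/

/-- The polynomial over `ℤ` for the second coordinate of a sum of 2-typical Witt vectors. -/
theorem wittAdd_two_one :
    WittVector.wittAdd 2 1 = MvPolynomial.X (0, 1) + MvPolynomial.X (1, 1) -
      MvPolynomial.X (0, 0) * MvPolynomial.X (1, 0) := by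
  have h := wittStructureInt_prop 2 (MvPolynomial.X (0 : Fin 2) + MvPolynomial.X 1) 1
  have h0 := WittVector.wittAdd_zero 2
  unfold WittVector.wittAdd at h0 ⊢
  simp only [wittPolynomial_one, map_add, map_mul, map_pow, MvPolynomial.bind₁_X_right,
    MvPolynomial.bind₁_C_right, MvPolynomial.rename_X, MvPolynomial.rename_C, h0] at h
  have hC : (MvPolynomial.C ((2 : ℕ) : ℤ) : MvPolynomial (Fin 2 × ℕ) ℤ) = 2 := by simp
  rw [hC] at h
  -- `MvPolynomial _ ℤ` has no 2-torsion, so the ghost identity may be divided by 2.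
  refine mul_left_cancel₀ (two_ne_zero (α := MvPolynomial (Fin 2 × ℕ) ℤ)) ?_
  linear_combination h

theorem coeff_one_add {R : Type*} [CommRing R] (x y : WittVector 2 R) :
    (x + y).coeff 1 = x.coeff 1 + y.coeff 1 - x.coeff 0 * y.coeff 0 := by
  simp [WittVector.add_coeff, wittAdd_two_one, WittVector.peval, Function.uncurry]

/-- Let `R` be a commutative ring of characteristic 2 and `t, s ∈ R` with `t⁴ = s⁴ = 0`.
For the 2-typical Witt vectors `x` and `y` with coefficient sequences `(t², t, 0, 0, …)`
and `(s², s, 0, 0, …)`, and `u = t + s + t²s²`, one has `(x + y)₀ = u²` and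
`(x + y)₁ = u`. -/
theorem wittVector_boxAdd (R : Type*) [CommRing R] [CharP R 2]
    (t s : R) (ht : t ^ 4 = 0) (hs : s ^ 4 = 0)
    (x y : WittVector 2 R)
    (hx : x = WittVector.mk 2 (fun n => if n = 0 then t ^ 2 else if n = 1 then t else 0))
    (hy : y = WittVector.mk 2 (fun n => if n = 0 then s ^ 2 else if n = 1 then s else 0))
    (u : R) (hu : u = t + s + t ^ 2 * s ^ 2) :
    (x + y).coeff 0 = u ^ 2 ∧ (x + y).coeff 1 = u := by
  have h2 : (2 : R) = 0 := CharTwo.two_eq_zero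
  subst hx hy hu
  rw [WittVector.add_coeff_zero, coeff_one_add]
  simp only [WittVector.coeff_mk, if_true, one_ne_zero, if_false]
  constructor
  · linear_combination (-s ^ 4) * ht - (t * s + t ^ 3 * s ^ 2 + t ^ 2 * s ^ 3) * h2
  · linear_combination (-t ^ 2 * s ^ 2) * h2
end
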